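/- Let k ≥ 2, and let λ and μ be partitions with core_k(λ) = ∅ and |λ| = k|μ|; write quot_k(λ) = (λ_1,…,λ_k). Let P_μ^λ be the set of k-tuples (μ_1,…,μ_k) of partitions with |μ_i| = |λ_i| for all i and μ_1 ⊕ … ⊕ μ_k = μ. Then the map ω_{kμ}^λ : RHT_{kμ}^λ → ⋃_{(μ_1,…,μ_k)∈P_μ^λ} RHT_{μ_1}^{λ_1} × … × RHT_{μ_k}^{λ_k} is surjective, and every k-tuple (T_1,…,T_k) in its range has exactly z_μ/(z_{μ_1}···z_{μ_k}) preimages, where (μ_1,…,μ_k) are the types of (T_1,…,T_k). -/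

import Mathlib

open scoped BigOperators

namespace RimHookPaper

/-- A partition: a weakly decreasing, eventually-zero sequence of naturals;
`parts n` is the `(n+1)`-st part. -/
structure Partition : Type where
  parts : ℕ → ℕ
  antitone : ∀ ⦃i j : ℕ⦄, i ≤ j → parts j ≤ parts i
  eventually_zero : ∃ N : ℕ, ∀ i : ℕ, N ≤ i → parts i = 0

namespace Partition

/-- The size `|λ|` of a partition. -/
noncomputable def size (P : Partition) : ℕ := ∑ᶠ i, P.parts i

/-- The empty partition. -/
def empty : Partition := ⟨fun _ => 0, fun _ _ _ => le_rfl, ⟨0, fun _ _ => rfl⟩⟩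

/-- The number of nonzero parts of a partition. -/
noncomputable def length (P : Partition) : ℕ := sInf {N | P.parts N = 0}

/-- The cells of the Young diagram of a partition. -/
def cells (P : Partition) : Set (ℕ × ℕ) := {c | c.2 < P.parts c.1}

instance : LE Partition := ⟨fun Q P => ∀ i, Q.parts i ≤ P.parts i⟩

/-- The skew shape `P / Q` (as a set of cells). -/
def skew (P Q : Partition) : Set (ℕ × ℕ) := P.cells \ Q.cells

end Partition

/-- Edge-adjacency of cells. -/
def Adj (c d : ℕ × ℕ) : Prop :=
  (c.1 = d.1 ∧ (c.2 + 1 = d.2 ∨ d.2 + 1 = c.2)) ∨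
    (c.2 = d.2 ∧ (c.1 + 1 = d.1 ∨ d.1 + 1 = c.1))

/-- A set of cells is (edge-)connected. -/
def IsConnectedSet (S : Set (ℕ × ℕ)) : Prop :=
  ∀ c ∈ S, ∀ d ∈ S, Relation.ReflTransGen (fun x y => x ∈ S ∧ y ∈ S ∧ Adj x y) c d

/-- `S` contains no 2×2 square. -/
def NoSquare (S : Set (ℕ × ℕ)) : Prop :=
  ¬ ∃ i j : ℕ, (i, j) ∈ S ∧ (i + 1, j) ∈ S ∧ (i, j + 1) ∈ S ∧ (i + 1, j + 1) ∈ S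

/-- `P / Q` is a rim hook (border strip) of length `t`: a nonempty connected skew
shape with no 2×2 square, consisting of `t` boxes. -/
def IsRimHook (P Q : Partition) (t : ℕ) : Prop :=
  Q ≤ P ∧ (P.skew Q).Nonempty ∧ IsConnectedSet (P.skew Q) ∧ NoSquare (P.skew Q) ∧
    (P.skew Q).ncard = t

/-- One step of a rim hook tableau: an empty hook (`t = 0`) or a rim hook of length `t`. -/
def IsStep (P Q : Partition) (t : ℕ) : Prop :=
  (t = 0 ∧ P = Q) ∨ (0 < t ∧ IsRimHook P Q t)

/-- Number of rows met by a set of cells. -/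
noncomputable def rowCount (S : Set (ℕ × ℕ)) : ℕ := (Prod.fst '' S).ncard

/-- A rim hook tableau of shape `P` and type `μ`: a chain
`∅ = λ⁰ ⊆ λ¹ ⊆ ⋯ ⊆ λʳ = P` with each `λⁱ/λⁱ⁻¹` a (possibly empty)
rim hook of length `μᵢ`. -/
structure RHT (P : Partition) (μ : List ℕ) : Type where
  chain : Fin (μ.length + 1) → Partition
  chain_zero : chain 0 = Partition.empty
  chain_last : chain (Fin.last μ.length) = P
  step : ∀ j : Fin μ.length, IsStep (chain j.succ) (chain j.castSucc) (μ.get j)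

/-- The total height of a rim hook tableau: the sum of the heights
(number of rows minus one) of its nonempty rim hooks. -/
noncomputable def RHT.height {P : Partition} {μ : List ℕ} (T : RHT P μ) : ℕ :=
  ∑ j : Fin μ.length, (rowCount ((T.chain j.succ).skew (T.chain j.castSucc)) - 1)

/-- The character value `χ^λ_μ` of the symmetric group, via the
Murnaghan–Nakayama rule. -/
noncomputable def chiAux (P : Partition) (μ : List ℕ) : ℤ :=
  ∑ᶠ T : RHT P μ, (-1 : ℤ) ^ T.height

/-- The parts of a multiset, listed in weakly decreasing order. -/
def typeList (μ : Multiset ℕ) : List ℕ := (μ.sort (· ≤ ·)).reverse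

/-- `χ^λ_μ` for a multiset type `μ`. -/
noncomputable def chi (P : Partition) (μ : Multiset ℕ) : ℤ := chiAux P (typeList μ)

/-- `z_μ = ∏_j m_j! · j^{m_j}` where `μ` has `m_j` parts equal to `j`. -/
def zpart (μ : Multiset ℕ) : ℕ := μ.prod * ∏ j ∈ μ.toFinset, (μ.count j).factorial

/-- `χ^λ(σ)`: the character evaluated at a permutation, via its full cycle type
(including fixed points as parts equal to 1). -/
noncomputable def chiPerm (P : Partition) {m : ℕ} (σ : Equiv.Perm (Fin m)) : ℤ :=
  chi P (σ.cycleType + Multiset.replicate (m - σ.cycleType.sum) 1)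

/-- Position of the zero (up step) corresponding to row `n` in the 0/1 sequence
`s(P)`, where the median of `s(P)` is the gap just below position `0`. -/
def zpos (P : Partition) (n : ℕ) : ℤ := (P.parts n : ℤ) - (n : ℤ) - 1

/-- `s(P)` has a `0` (an up step) at position `x`; otherwise it has a `1`. -/
def isZeroAt (P : Partition) (x : ℤ) : Prop := ∃ n : ℕ, zpos P n = x

/-- `Q` is the `k`-quotient of `P`: for each residue `i`, the 0/1 sequence of `Q i`
is (up to the shift `d` recording the position of its median) the subsequence of
`s(P)` consisting of every `k`-th digit, including the `(i+1)`-st digit after the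
median of `s(P)`. -/
def IsKQuotient (k : ℕ) (P : Partition) (Q : Fin k → Partition) : Prop :=
  ∀ i : Fin k, ∃ d : ℤ, ∀ j : ℤ,
    isZeroAt (Q i) j ↔ isZeroAt P (((i : ℕ) : ℤ) + (j + d) * (k : ℤ))

/-- `C` is the `k`-core of `P`: it is obtained from `P` by successively removing
rim hooks of length `k`, as long as possible. -/
def IsKCore (k : ℕ) (P C : Partition) : Prop :=
  Relation.ReflTransGen (fun A B => IsRimHook A B k) P C ∧ ¬ ∃ C', IsRimHook C C' k

/-- The map on row indices induced by moving the zero in row `m` down (left)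
to row `m'`, the zeros in rows `m+1,…,m'` each moving up one row. -/
def cycleFun (m m' n : ℕ) : ℕ :=
  if n = m then m' else if m < n ∧ n ≤ m' then n - 1 else n

/-- One tracking step for the zero permutation: passing from `A` to `B` by removing
a rim hook, encoded on the 0/1 sequence as interchanging a `1` with a later `0`
(the moved zero, in row `m` of `A`, jumps over `m' - m` zeros, landing in row `m'`
of `B`); the row of each labeled zero is updated by `cycleFun m m'`. -/
def StepTrack (A B : Partition) (f g : ℕ → ℕ) : Prop :=
  (A = B ∧ g = f) ∨
    ∃ m m' : ℕ, m ≤ m' ∧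
      (∀ n, n < m → zpos B n = zpos A n) ∧
      (∀ n, m ≤ n → n < m' → zpos B n = zpos A (n + 1)) ∧
      (∀ n, m' < n → zpos B n = zpos A n) ∧
      g = fun i => cycleFun m m' (f i)

/-- `π` is the zero permutation of the rim hook tableau `T`: label the zeros of
`s(P)` succeeding the first one by `1,…,ℓ(P)` from left to right (`q j i` is the
row of label `i+1` at stage `j` of the peeling, rows counted from the top), peel
the rim hooks of `T` in order of decreasing entries, and read off the labels in
the final sequence `s(∅)` from left to right. -/
def IsZeroPerm {P : Partition} {μ : List ℕ} (T : RHT P μ)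
    (π : Equiv.Perm (Fin P.length)) : Prop :=
  ∃ q : Fin (μ.length + 1) → ℕ → ℕ,
    (∀ i : ℕ, i < P.length → q (Fin.last μ.length) i = P.length - 1 - i) ∧
    (∀ j : Fin μ.length,
      StepTrack (T.chain j.succ) (T.chain j.castSucc) (q j.succ) (q j.castSucc)) ∧
    (∀ i : Fin P.length, q 0 ((π i : ℕ)) = P.length - 1 - (i : ℕ))

/-- `ω(T) = (T₁,…,T_k)`: the rim hook tableau `T` (all of whose hook lengths are
divisible by `k`) decomposes into the `k`-tuple of rim hook tableaux `Ti` on the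
`k`-quotient: each step of `T`, removing a hook of length `k·t`, affects exactly
one subsequence (mod `k`) of the 0/1 sequence, i.e. removes a hook of length `t`
from exactly one of the quotient partitions. -/
def OmegaRel (k : ℕ) {P : Partition} {κ : List ℕ} (T : RHT P κ)
    {Q : Fin k → Partition} {ν : Fin k → List ℕ}
    (Ti : ∀ i : Fin k, RHT (Q i) (ν i)) : Prop :=
  ∃ (QC : Fin (κ.length + 1) → Fin k → Partition) (a : Fin κ.length → Fin k),
    (∀ j, IsKQuotient k (T.chain j) (QC j)) ∧
    (∀ j : Fin κ.length, ∀ i, i ≠ a j → QC j.castSucc i = QC j.succ i) ∧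
    (∀ j : Fin κ.length, ∃ t : ℕ, κ.get j = k * t ∧
      IsStep (QC j.succ (a j)) (QC j.castSucc (a j)) t) ∧
    (∀ i : Fin k, ∃ e : Fin (ν i).length → Fin κ.length,
      StrictMono e ∧ (∀ s, a (e s) = i) ∧ (∀ j, a j = i → ∃ s, e s = j) ∧
      (∀ s, k * (ν i).get s = κ.get (e s)) ∧
      (Ti i).chain 0 = QC 0 i ∧
      (∀ s : Fin (ν i).length, (Ti i).chain s.succ = QC (Fin.succ (e s)) i))

/-- Row description of a rim hook. -/
def RH (A B : Partition) (m m' t : ℕ) : Prop :=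
  m ≤ m' ∧ (∀ n, n < m → A.parts n = B.parts n) ∧
  (∀ n, m ≤ n → n < m' → B.parts n + 1 = A.parts (n+1)) ∧ B.parts m' < A.parts m' ∧
  (∀ n, m' < n → A.parts n = B.parts n) ∧ A.parts m + m' = B.parts m' + m + t

theorem mem_skew (A B : Partition) (n c : ℕ) :
    (n, c) ∈ A.skew B ↔ B.parts n ≤ c ∧ c < A.parts n := by
  simp [Partition.skew, Partition.cells]; tauto

theorem skew_ncard (A B : Partition) (N : ℕ) (hN : ∀ n, N ≤ n → A.parts n = 0) :
    (A.skew B).ncard = ∑ n ∈ Finset.range N, (A.parts n - B.parts n) := by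
  have : A.skew B = ↑(((Finset.range N).sigma
      (fun n => Finset.Ico (B.parts n) (A.parts n))).map
      ⟨fun p : (_ : ℕ) × ℕ => (p.1, p.2), by
        rintro ⟨a, b⟩ ⟨c, d⟩ h
        simp at h
        obtain ⟨rfl, rfl⟩ := h
        rfl⟩) := by
    ext ⟨n, c⟩
    rw [mem_skew]
    simp only [Finset.coe_map, Set.mem_image, Finset.mem_coe, Finset.mem_sigma,
      Finset.mem_range, Finset.mem_Ico]
    constructor
    · intro h
      refine ⟨⟨n, c⟩, ⟨?_, h⟩, rfl⟩
      by_contra hc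
      have := hN n (by simpa using hc)
      omega
    · rintro ⟨⟨a, b⟩, ⟨_, h⟩, heq⟩
      have heq : (a, b) = (n, c) := heq
      rw [Prod.mk.injEq] at heq
      obtain ⟨rfl, rfl⟩ := heq
      exact h
  rw [this, Set.ncard_coe_finset, Finset.card_map, Finset.card_sigma]
  simp

theorem size_eq (A : Partition) (N : ℕ) (hN : ∀ n, N ≤ n → A.parts n = 0) :
    A.size = ∑ n ∈ Finset.range N, A.parts n := by
  unfold Partition.size
  apply finsum_eq_sum_of_support_subset
  intro n hn
  simp only [Function.mem_support] at hn
  simp only [Finset.coe_range, Set.mem_Iio]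
  by_contra hc
  exact hn (hN n (by simpa using hc))

theorem RH.le {A B : Partition} {m m' t : ℕ} (h : RH A B m m' t) : B ≤ A := by
  obtain ⟨h1, h2, h3, h4, h5, h6⟩ := h
  intro n
  rcases lt_or_ge n m with h | h
  · rw [h2 n h]
  · rcases lt_trichotomy n m' with h' | h' | h'
    · have := h3 n h h'
      have := A.antitone (Nat.le_succ n)
      simp at this
      omega
    · subst h'; omega
    · rw [h5 n h']

theorem RH.ncard {A B : Partition} {m m' t : ℕ} (h : RH A B m m' t) :
    (A.skew B).ncard = t := by
  obtain ⟨N, hN⟩ := A.eventually_zero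
  have hle := h.le
  obtain ⟨h1, h2, h3, h4, h5, h6⟩ := h
  rw [skew_ncard A B (N + m' + 1) (fun n hn => hN n (by omega))]
  have key : ∀ M, (M ≤ m → ∑ n ∈ Finset.range M, (A.parts n - B.parts n) = 0) ∧
      (m ≤ M → M ≤ m' → ∑ n ∈ Finset.range M, (A.parts n - B.parts n) + A.parts M
        = A.parts m + (M - m)) ∧
      (m' < M → ∑ n ∈ Finset.range M, (A.parts n - B.parts n) = t) := by
    intro M
    induction M with
    | zero =>
      simp
      intro h
      subst h
      simp
    | succ M ih =>
      rw [Finset.sum_range_succ]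
      generalize ∑ n ∈ Finset.range M, (A.parts n - B.parts n) = S at ih
      have a2 := h2 M
      have a3 := h3 M
      have a5 := h5 M
      have a0 : B.parts M ≤ A.parts M := hle M
      have a1 := A.antitone (Nat.le_succ M)
      simp only [Nat.succ_eq_add_one] at a1
      obtain ⟨i1, i2, i3⟩ := ih
      refine ⟨fun h => ?_, fun h h' => ?_, fun h => ?_⟩
      · have := i1 (by omega)
        have := a2 (by omega)
        omega
      · rcases Nat.lt_or_ge M m with hh | hh
        · have := i1 (by omega)
          have := a2 (by omega)
          have : M + 1 = m := by omega
          subst this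
          omega
        · have := i2 (by omega) (by omega)
          have := a3 (by omega) (by omega)
          omega
      · rcases Nat.lt_or_ge m' M with hh | hh
        · have := i3 (by omega)
          have := a5 (by omega)
          omega
        · have : M = m' := by omega
          subst this
          have := i2 (by omega) (by omega)
          omega
  exact (key (N + m' + 1)).2.2 (by omega)

theorem RH.isRimHook {A B : Partition} {m m' t : ℕ} (h : RH A B m m' t) :
    IsRimHook A B t := by
  refine ⟨h.le, ?_, ?_, ?_, h.ncard⟩
  · obtain ⟨h1, h2, h3, h4, h5, h6⟩ := h
    exact ⟨(m', B.parts m'), by rw [mem_skew]; omega⟩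
  · obtain ⟨h1, h2, h3, h4, h5, h6⟩ := h
    set S := A.skew B with hS
    have hsymm : Std.Symm (fun x y => x ∈ S ∧ y ∈ S ∧ Adj x y) := by
      constructor
      rintro x y ⟨hx, hy, hxy⟩
      refine ⟨hy, hx, ?_⟩
      unfold Adj at *
      omega
    have hrow : ∀ d n, (n, B.parts n + d) ∈ S →
        Relation.ReflTransGen (fun x y => x ∈ S ∧ y ∈ S ∧ Adj x y)
          (n, B.parts n + d) (n, B.parts n) := by
      intro d n
      induction d with
      | zero => intro _; exact Relation.ReflTransGen.refl
      | succ d ih =>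
        intro hd
        have hd' : (n, B.parts n + d) ∈ S := by
          rw [hS, mem_skew] at *; omega
        refine Relation.ReflTransGen.head ⟨hd, hd', ?_⟩ (ih hd')
        unfold Adj; simp; omega
    have hcol : ∀ d n c, n + d = m' → m ≤ n → (n, c) ∈ S →
        Relation.ReflTransGen (fun x y => x ∈ S ∧ y ∈ S ∧ Adj x y)
          (n, c) (m', B.parts m') := by
      intro d
      induction d with
      | zero =>
        intro n c hn hm hc
        simp at hn
        subst hn
        have h' := hc
        rw [hS, mem_skew] at h'
        obtain ⟨d, rfl⟩ := Nat.exists_eq_add_of_le h'.1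
        exact hrow d n hc
      | succ d ih =>
        intro n c hn hm hc
        have h' := hc
        rw [hS, mem_skew] at h'
        obtain ⟨d, rfl⟩ := Nat.exists_eq_add_of_le h'.1
        have e3 := h3 n hm (by omega)
        have hb := B.antitone (Nat.le_succ n)
        simp only [Nat.succ_eq_add_one] at hb
        have hx : (n, B.parts n) ∈ S := by rw [hS, mem_skew]; omega
        have hy : (n + 1, B.parts n) ∈ S := by rw [hS, mem_skew]; omega
        refine (hrow d n hc).trans (Relation.ReflTransGen.head ⟨hx, hy, ?_⟩
          (ih (n+1) _ (by omega) (by omega) hy))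
        unfold Adj; simp
    have hall : ∀ c ∈ S, Relation.ReflTransGen (fun x y => x ∈ S ∧ y ∈ S ∧ Adj x y)
          c (m', B.parts m') := by
      rintro ⟨n, c⟩ hc
      have h' := hc
      rw [hS, mem_skew] at h'
      have i1 : m ≤ n := by
        by_contra hh
        have := h2 n (by omega)
        omega
      have i2 : n ≤ m' := by
        by_contra hh
        have := h5 n (by omega)
        omega
      exact hcol (m' - n) n c (by omega) i1 hc
    intro c hc d hd
    have : Std.Symm (Relation.ReflTransGen (fun x y => x ∈ S ∧ y ∈ S ∧ Adj x y)) :=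
      Relation.ReflTransGen.stdSymm
    exact (hall c hc).trans (this.symm _ _ (hall d hd))
  · obtain ⟨h1, h2, h3, h4, h5, h6⟩ := h
    rintro ⟨i, j, q1, q2, q3, q4⟩
    rw [mem_skew] at *
    have a2 := h2 i
    have a3 := h3 i
    have a5 := h5 (i+1)
    by_cases i < m
    · have := a2 (by omega)
      omega
    by_cases i < m'
    · have := a3 (by omega) (by omega)
      omega
    · have := a5 (by omega)
      omega

theorem cross {S : Set (ℕ × ℕ)} (n : ℕ) (c d : ℕ × ℕ)
    (h : Relation.ReflTransGen (fun x y => x ∈ S ∧ y ∈ S ∧ Adj x y) c d) :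
    c.1 ≤ n → n < d.1 → ∃ j, (n, j) ∈ S ∧ (n + 1, j) ∈ S := by
  induction h with
  | refl => intro h1 h2; omega
  | @tail b e hb hbe ih =>
    intro h1 h2
    by_cases hbn : n < b.1
    · exact ih h1 hbn
    · obtain ⟨hb, he, hadj⟩ := hbe
      obtain ⟨b1, b2⟩ := b
      obtain ⟨e1, e2⟩ := e
      unfold Adj at hadj
      simp at *
      have : b1 = n := by omega
      have : e1 = n + 1 := by omega
      have : e2 = b2 := by omega
      subst_vars
      exact ⟨_, hb, he⟩

theorem isRimHook_iff {A B : Partition} {t : ℕ} :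
    IsRimHook A B t ↔ ∃ m m', RH A B m m' t := by
  constructor
  swap
  · rintro ⟨m, m', h⟩; exact h.isRimHook
  rintro ⟨hle, hne, hconn, hsq, hcard⟩
  classical
  obtain ⟨N, hN⟩ := A.eventually_zero
  let R : Finset ℕ := (Finset.range N).filter (fun n => B.parts n < A.parts n)
  have hR : ∀ n, n ∈ R ↔ B.parts n < A.parts n := by
    intro n
    simp only [R, Finset.mem_filter, Finset.mem_range, and_iff_right_iff_imp]
    intro h
    by_contra hc
    have := hN n (by omega)
    omega
  have hRne : R.Nonempty := by
    obtain ⟨⟨n, c⟩, h⟩ := hne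
    rw [mem_skew] at h
    exact ⟨n, by rw [hR]; omega⟩
  set m := R.min' hRne with hm
  set m' := R.max' hRne with hm'
  have hmR := (hR m).1 (R.min'_mem hRne)
  have hmR' := (hR m').1 (R.max'_mem hRne)
  have hmid : ∀ n, m ≤ n → n < m' → B.parts n + 1 = A.parts (n+1) := by
    intro n h1 h2
    obtain ⟨j, j1, j2⟩ := cross (S := A.skew B) n (m, B.parts m) (m', B.parts m')
      (hconn _ (by rw [mem_skew]; omega) _ (by rw [mem_skew]; omega)) h1 h2
    rw [mem_skew] at j1 j2
    by_contra hc
    have hb := B.antitone (Nat.le_succ n)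
    have ha := A.antitone (Nat.le_succ n)
    simp only [Nat.succ_eq_add_one] at ha hb
    apply hsq
    refine ⟨n, B.parts n, ?_, ?_, ?_, ?_⟩ <;> rw [mem_skew] <;> omega
  have heq : ∀ n, n ∉ R → A.parts n = B.parts n := by
    intro n hn
    rw [hR] at hn
    have : B.parts n ≤ A.parts n := hle n
    omega
  have hlt : ∀ n, n < m → A.parts n = B.parts n := by
    intro n hn
    apply heq
    intro h
    have := R.min'_le n h
    omega
  have hgt : ∀ n, m' < n → A.parts n = B.parts n := by
    intro n hn
    apply heq
    intro h
    have := R.le_max' n h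
    omega
  have hmm : m ≤ m' := R.min'_le _ (R.max'_mem hRne)
  have hAm := A.antitone hmm
  have hrh : RH A B m m' (A.parts m + m' - B.parts m' - m) :=
    ⟨hmm, hlt, hmid, hmR', hgt, by omega⟩
  have := hrh.ncard
  rw [hcard] at this
  exact ⟨m, m', by rw [this]; exact hrh⟩

theorem IsRimHook.size {A B : Partition} {t : ℕ} (h : IsRimHook A B t) :
    A.size = B.size + t := by
  obtain ⟨N, hN⟩ := A.eventually_zero
  obtain ⟨hle, -, -, -, hc⟩ := h
  rw [size_eq A N hN, size_eq B N (fun n hn => by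
    have := hN n hn
    have : B.parts n ≤ A.parts n := hle n
    omega), ← hc, skew_ncard A B N hN, ← Finset.sum_add_distrib]
  refine Finset.sum_congr rfl fun n _ => ?_
  have : B.parts n ≤ A.parts n := hle n
  omega

theorem zpos_strictAnti (P : Partition) : StrictAnti (zpos P) := by
  intro a b h
  have := P.antitone h.le
  unfold zpos
  omega

theorem Partition.ext' {P Q : Partition} (h : ∀ n, P.parts n = Q.parts n) : P = Q := by
  cases P; cases Q; congr; funext n; exact h n

theorem isZeroAt_shift {P Q : Partition} {d : ℤ}
    (h : ∀ j, isZeroAt P j ↔ isZeroAt Q (j + d)) : d = 0 ∧ P = Q := by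
  have h1 : StrictAnti (fun n => zpos P n + d) := fun a b hab => by
    have := zpos_strictAnti P hab
    simp only
    omega
  have h2 : (fun n => zpos P n + d) = zpos Q := by
    have hneg : ((fun n => -(zpos P n + d)) = fun n => -(zpos Q n)) →
        (fun n => zpos P n + d) = zpos Q := by
      intro hh
      funext n
      have : -(zpos P n + d) = -(zpos Q n) := congrFun hh n
      omega
    apply hneg
    rw [← StrictMono.range_inj (fun a b hab => by
      have : zpos P b + d < zpos P a + d := h1 hab
      show -(zpos P a + d) < -(zpos P b + d)
      omega) (fun a b hab => by
      have := zpos_strictAnti Q hab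
      show -(zpos Q a) < -(zpos Q b)
      omega)]
    ext x
    constructor
    · rintro ⟨n, rfl⟩
      obtain ⟨q, hq⟩ := (h _).1 ⟨n, rfl⟩
      exact ⟨q, by simp only; omega⟩
    · rintro ⟨q, rfl⟩
      obtain ⟨n, hn⟩ := (h (zpos Q q - d)).2 ⟨q, by omega⟩
      exact ⟨n, by simp only; omega⟩
  have h3 : ∀ n, zpos P n + d = zpos Q n := fun n => congrFun h2 n
  have hd : d = 0 := by
    obtain ⟨N, hN⟩ := P.eventually_zero
    obtain ⟨M, hM⟩ := Q.eventually_zero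
    have := h3 (N + M)
    unfold zpos at this
    rw [hN _ (by omega), hM _ (by omega)] at this
    omega
  refine ⟨hd, Partition.ext' fun n => ?_⟩
  have := h3 n
  unfold zpos at this
  omega

theorem isZeroAt_inj {P Q : Partition} (h : ∀ j, isZeroAt P j ↔ isZeroAt Q j) : P = Q :=
  (isZeroAt_shift (d := 0) (by simpa using h)).2

/-- `A` is obtained from `B` by moving the zero at `y` to `y+t`. -/
def Move (A B : Partition) (y : ℤ) (t : ℕ) : Prop :=
  isZeroAt B y ∧ ¬ isZeroAt B (y + t) ∧
    ∀ x, isZeroAt A x ↔ (isZeroAt B x ∧ x ≠ y) ∨ x = y + t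

theorem RH.move {A B : Partition} {m m' t : ℕ} (h : RH A B m m' t) :
    Move A B (zpos B m') t := by
  have hB := zpos_strictAnti B
  have hA := zpos_strictAnti A
  obtain ⟨h1, h2, h3, h4, h5, h6⟩ := h
  have z1 : ∀ n, n < m → zpos A n = zpos B n := fun n hn => by
    unfold zpos; rw [h2 n hn]
  have z2 : ∀ n, m ≤ n → n < m' → zpos A (n+1) = zpos B n := fun n hn hn' => by
    unfold zpos; rw [← h3 n hn hn']; push_cast; ring
  have z3 : ∀ n, m' < n → zpos A n = zpos B n := fun n hn => by
    unfold zpos; rw [h5 n hn]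
  have z4 : zpos A m = zpos B m' + t := by unfold zpos; omega
  refine ⟨⟨m', rfl⟩, ?_, ?_⟩
  · rintro ⟨n, hn⟩
    rw [← z4] at hn
    rcases lt_or_ge n m with h | h
    · rw [← z1 n h] at hn
      have := hA.injective hn
      omega
    · rcases lt_trichotomy n m' with h' | h' | h'
      · rw [← z2 n h h'] at hn
        have := hA.injective hn
        omega
      · subst h'
        have := A.antitone h1
        unfold zpos at hn
        omega
      · rw [← z3 n h'] at hn
        have := hA.injective hn
        omega
  · intro x
    constructor
    · rintro ⟨n, rfl⟩
      rcases lt_trichotomy n m with h | h | h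
      · left
        rw [z1 n h]
        exact ⟨⟨n, rfl⟩, fun hh => by have := hB.injective hh; omega⟩
      · right; rw [h, z4]
      · left
        rcases le_or_gt n m' with h' | h'
        · obtain ⟨n, rfl⟩ : ∃ q, n = q + 1 := ⟨n - 1, by omega⟩
          rw [z2 n (by omega) (by omega)]
          exact ⟨⟨n, rfl⟩, fun hh => by have := hB.injective hh; omega⟩
        · rw [z3 n h']
          exact ⟨⟨n, rfl⟩, fun hh => by have := hB.injective hh; omega⟩
    · rintro (⟨⟨n, rfl⟩, hne⟩ | rfl)
      · rcases lt_or_ge n m with h | h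
        · exact ⟨n, z1 n h⟩
        · rcases lt_trichotomy n m' with h' | h' | h'
          · exact ⟨n+1, z2 n h h'⟩
          · subst h'; exact absurd rfl hne
          · exact ⟨n, z3 n h'⟩
      · exact ⟨m, z4⟩

theorem exists_RH (B : Partition) (y : ℤ) (t : ℕ) (ht : 0 < t) (hy : isZeroAt B y)
    (hyt : ¬ isZeroAt B (y + t)) : ∃ A m m', RH A B m m' t ∧ zpos B m' = y := by
  obtain ⟨m', rfl⟩ := hy
  have hex : ∃ n, zpos B n < zpos B m' + t := ⟨m', by omega⟩
  classical
  let m := Nat.find hex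
  have hm : zpos B m < zpos B m' + t := Nat.find_spec hex
  have hmin : ∀ n, n < m → zpos B m' + t < zpos B n := by
    intro n hn
    have h1 := Nat.find_min hex hn
    have h2 : zpos B n ≠ zpos B m' + t := fun h => hyt ⟨n, h⟩
    omega
  have hmm : m ≤ m' := Nat.find_min' hex (by omega)
  clear_value m
  let v : ℕ := B.parts m' + t + m - m'
  have hv : (v : ℤ) = zpos B m' + t + m + 1 ∧ B.parts m + 1 ≤ v := by
    simp only [v]
    unfold zpos at *
    omega
  have hvlt : ∀ n, n < m → v ≤ B.parts n := by
    intro n hn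
    obtain ⟨q, rfl⟩ : ∃ q, m = q + 1 := ⟨m - 1, by omega⟩
    have := hmin q (by omega)
    have h2 := B.antitone (show n ≤ q by omega)
    unfold zpos at *
    omega
  have hv3 : v + m' = B.parts m' + m + t := by
    unfold zpos at *
    omega
  clear_value v
  let f : ℕ → ℕ := fun n => if n < m then B.parts n else if n = m then v else
    if n ≤ m' then B.parts (n-1) + 1 else B.parts n
  have hf : ∀ n, f (n+1) ≤ f n := by
    intro n
    have e1 := B.antitone (Nat.le_succ n)
    have e2 := B.antitone (Nat.sub_le n 1)
    have e3 := hvlt n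
    simp only [Nat.succ_eq_add_one] at e1
    simp only [f]
    have e4 : n = m → B.parts n = B.parts m := fun h => by rw [h]
    have e5 : n + 1 - 1 = n := rfl
    rw [e5]
    split_ifs <;> omega
  refine ⟨⟨f, fun i j h => antitone_nat_of_succ_le hf h, ?_⟩, m, m', ⟨hmm, ?_, ?_, ?_, ?_, ?_⟩, rfl⟩
  · obtain ⟨N, hN⟩ := B.eventually_zero
    refine ⟨N + m' + 1, fun i hi => ?_⟩
    simp only [f]
    rw [if_neg (by omega), if_neg (by omega), if_neg (by omega)]
    exact hN i (by omega)
  · intro n hn; simp only [f]; rw [if_pos hn]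
  · intro n h1 h2; simp only [f]
    rw [if_neg (by omega), if_neg (by omega), if_pos (by omega)]; rfl
  · simp only [f]
    rw [if_neg (by omega)]
    split_ifs with h
    · rw [h]; omega
    · have e2 := B.antitone (Nat.sub_le m' 1)
      omega
    · omega
  · intro n hn; simp only [f]
    rw [if_neg (by omega), if_neg (by omega), if_neg (by omega)]
  · simp only [f]
    simp [hv3]

theorem exists_move (B : Partition) (y : ℤ) (t : ℕ) (ht : 0 < t) (hy : isZeroAt B y)
    (hyt : ¬ isZeroAt B (y + t)) : ∃ A, Move A B y t := by
  obtain ⟨A, m, m', h, rfl⟩ := exists_RH B y t ht hy hyt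
  exact ⟨A, h.move⟩

theorem rimHook_iff_move {A B : Partition} {t : ℕ} (ht : 0 < t) :
    IsRimHook A B t ↔ ∃ y, Move A B y t := by
  rw [isRimHook_iff]
  constructor
  · rintro ⟨m, m', h⟩; exact ⟨_, h.move⟩
  · rintro ⟨y, h1, h2, h3⟩
    obtain ⟨A', m, m', h, rfl⟩ := exists_RH B y t ht h1 h2
    have : A = A' := isZeroAt_inj fun x => by rw [h3, h.move.2.2]
    exact ⟨m, m', this ▸ h⟩

def Quot0 (k : ℕ) (P : Partition) (Q : Fin k → Partition) : Prop :=
  ∀ (i : Fin k) (j : ℤ), isZeroAt (Q i) j ↔ isZeroAt P (((i : ℕ) : ℤ) + j * (k : ℤ))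

theorem dec_exists {k : ℕ} (hk : 0 < k) (x : ℤ) :
    ∃ (i : Fin k) (r : ℤ), x = ((i : ℕ) : ℤ) + r * (k : ℤ) := by
  have h1 := Int.emod_nonneg x (show (k : ℤ) ≠ 0 by omega)
  have h2 := Int.emod_lt_of_pos x (show (0:ℤ) < k by omega)
  refine ⟨⟨(x % k).toNat, by omega⟩, x / k, ?_⟩
  have := Int.emod_add_mul_ediv x k
  simp only [Int.toNat_of_nonneg h1]
  linarith

theorem dec_unique {k : ℕ} {i i' : Fin k} {r r' : ℤ}
    (h : ((i : ℕ) : ℤ) + r * (k : ℤ) = ((i' : ℕ) : ℤ) + r' * (k : ℤ)) : i = i' ∧ r = r' := by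
  have hi := i.2
  have hi' := i'.2
  have hr : r = r' := by
    have a1 : (r - r') * k < 1 * k := by linarith [show ((i' : ℕ) : ℤ) < k by omega, show (0:ℤ) ≤ ((i:ℕ):ℤ) by omega]
    have a2 : (r' - r) * k < 1 * k := by linarith [show ((i : ℕ) : ℤ) < k by omega, show (0:ℤ) ≤ ((i':ℕ):ℤ) by omega]
    have b1 := lt_of_mul_lt_mul_right a1 (by omega)
    have b2 := lt_of_mul_lt_mul_right a2 (by omega)
    omega
  subst hr
  refine ⟨Fin.ext ?_, rfl⟩
  omega

theorem Quot0.inj {k : ℕ} (hk : 0 < k) {A A' : Partition} {Q : Fin k → Partition}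
    (h : Quot0 k A Q) (h' : Quot0 k A' Q) : A = A' := by
  apply isZeroAt_inj
  intro x
  obtain ⟨i, r, rfl⟩ := dec_exists hk x
  rw [← h, ← h']

theorem Quot0.isK {k : ℕ} {A : Partition} {Q : Fin k → Partition}
    (h : Quot0 k A Q) : IsKQuotient k A Q := fun i => ⟨0, fun j => by rw [h i j]; simp⟩

theorem Quot0.unique {k : ℕ} {A : Partition} {Q Q' : Fin k → Partition}
    (h : Quot0 k A Q) (h' : IsKQuotient k A Q') : Q' = Q := by
  funext i
  obtain ⟨d, hd⟩ := h' i
  exact (isZeroAt_shift (d := d) fun j => by rw [hd j, h i (j + d)]).2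

theorem isZeroAt_empty (j : ℤ) : isZeroAt Partition.empty j ↔ j < 0 := by
  constructor
  · rintro ⟨n, rfl⟩
    simp [zpos, Partition.empty]
    omega
  · intro h
    refine ⟨(-j - 1).toNat, ?_⟩
    simp [zpos, Partition.empty]
    omega

theorem quot0_empty (k : ℕ) : Quot0 k Partition.empty (fun _ => Partition.empty) := by
  intro i j
  rw [isZeroAt_empty, isZeroAt_empty]
  have hi := i.2
  constructor
  · intro h
    have : (j + 1) * k ≤ 0 := mul_nonpos_of_nonpos_of_nonneg (by omega) (by omega)
    linarith [show ((i : ℕ) : ℤ) < k by omega]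
  · intro h
    by_contra hc
    have : 0 ≤ j * k := mul_nonneg (by omega) (by omega)
    omega

theorem quot_move {k : ℕ} (hk : 0 < k) {A B : Partition} {QA QB : Fin k → Partition}
    (hB : Quot0 k B QB) (hA : Quot0 k A QA) (i : Fin k) (r : ℤ) (t : ℕ) :
    Move A B (((i : ℕ) : ℤ) + r * k) (k * t) ↔
      (∀ i', i' ≠ i → QA i' = QB i') ∧ Move (QA i) (QB i) r t := by
  have e : ((i : ℕ) : ℤ) + r * k + ((k * t : ℕ) : ℤ) = ((i : ℕ) : ℤ) + (r + t) * k := by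
    push_cast; ring
  constructor
  · rintro ⟨h1, h2, h3⟩
    rw [e] at h2
    rw [e] at h3
    refine ⟨fun i' hi' => isZeroAt_inj fun j => ?_, ?_, ?_, fun j => ?_⟩
    · rw [hA, hB, h3]
      constructor
      · rintro (⟨h, _⟩ | h)
        · exact h
        · exact absurd (dec_unique h).1 hi'
      · intro h
        exact Or.inl ⟨h, fun hh => hi' (dec_unique hh).1⟩
    · rwa [hB]
    · rwa [hB]
    · rw [hA, h3, hB]
      constructor
      · rintro (⟨h, h'⟩ | h)
        · exact Or.inl ⟨h, fun hh => h' (by rw [hh])⟩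
        · exact Or.inr (dec_unique h).2
      · rintro (⟨h, h'⟩ | h)
        · exact Or.inl ⟨h, fun hh => h' (dec_unique hh).2⟩
        · exact Or.inr (by rw [h])
  · rintro ⟨h0, h1, h2, h3⟩
    refine ⟨by rwa [← hB], by rw [e]; rwa [← hB], fun x => ?_⟩
    obtain ⟨i', j, rfl⟩ := dec_exists hk x
    rw [← hA, e, ← hB]
    by_cases hi : i' = i
    · subst hi
      rw [h3]
      constructor
      · rintro (⟨h, h'⟩ | h)
        · exact Or.inl ⟨h, fun hh => h' (dec_unique hh).2⟩
        · exact Or.inr (by rw [h])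
      · rintro (⟨h, h'⟩ | h)
        · exact Or.inl ⟨h, fun hh => h' (by rw [hh])⟩
        · exact Or.inr (dec_unique h).2
    · rw [h0 i' hi]
      constructor
      · intro h
        exact Or.inl ⟨h, fun hh => hi (dec_unique hh).1⟩
      · rintro (⟨h, _⟩ | h)
        · exact h
        · exact absurd (dec_unique h).1 hi

theorem quot_hook {k : ℕ} (hk : 0 < k) {A B : Partition} {QA QB : Fin k → Partition}
    (hB : Quot0 k B QB) (hA : Quot0 k A QA) (t : ℕ) (ht : 0 < t) :
    IsRimHook A B (k * t) ↔
      ∃ i, (∀ i', i' ≠ i → QA i' = QB i') ∧ IsRimHook (QA i) (QB i) t := by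
  rw [rimHook_iff_move (by positivity)]
  constructor
  · rintro ⟨y, h⟩
    obtain ⟨i, r, rfl⟩ := dec_exists hk y
    rw [quot_move hk hB hA] at h
    exact ⟨i, h.1, (rimHook_iff_move ht).2 ⟨r, h.2⟩⟩
  · rintro ⟨i, h0, h⟩
    obtain ⟨r, hr⟩ := (rimHook_iff_move ht).1 h
    exact ⟨_, (quot_move hk hB hA i r t).2 ⟨h0, hr⟩⟩

/-- going up: a quotient for the larger partition -/
theorem quot_up {k : ℕ} (hk : 0 < k) {A B : Partition} {QB : Fin k → Partition}
    (hB : Quot0 k B QB) (t : ℕ) (ht : 0 < t) (h : IsRimHook A B (k * t)) :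
    ∃ QA, Quot0 k A QA := by
  rw [rimHook_iff_move (by positivity)] at h
  obtain ⟨y, h1, h2, h3⟩ := h
  obtain ⟨i, r, rfl⟩ := dec_exists hk y
  have e : ((i : ℕ) : ℤ) + r * k + ((k * t : ℕ) : ℤ) = ((i : ℕ) : ℤ) + (r + t) * k := by
    push_cast; ring
  rw [e] at h2 
  rw [e] at h3
  rw [← hB] at h1 h2
  obtain ⟨C, g1, g2, g3⟩ := exists_move (QB i) r t ht h1 h2
  refine ⟨Function.update QB i C, fun i' j => ?_⟩
  rw [h3, ← hB]
  by_cases hi : i' = i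
  · subst hi
    rw [Function.update_self, g3]
    constructor
    · rintro (⟨h, h'⟩ | h)
      · exact Or.inl ⟨h, fun hh => h' (dec_unique hh).2⟩
      · exact Or.inr (by rw [h])
    · rintro (⟨h, h'⟩ | h)
      · exact Or.inl ⟨h, fun hh => h' (by rw [hh])⟩
      · exact Or.inr (dec_unique h).2
  · rw [Function.update_of_ne hi]
    constructor
    · intro h
      exact Or.inl ⟨h, fun hh => hi (dec_unique hh).1⟩
    · rintro (⟨h, _⟩ | h)
      · exact h
      · exact absurd (dec_unique h).1 hi

/-- going up: a partition for the larger quotient -/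
theorem quot_up' {k : ℕ} (hk : 0 < k) {B : Partition} {QA QB : Fin k → Partition}
    (hB : Quot0 k B QB) (t : ℕ) (ht : 0 < t) (i : Fin k)
    (h0 : ∀ i', i' ≠ i → QA i' = QB i') (h : IsRimHook (QA i) (QB i) t) :
    ∃ A, Quot0 k A QA := by
  rw [rimHook_iff_move ht] at h
  obtain ⟨r, h1, h2, h3⟩ := h
  have e : ((i : ℕ) : ℤ) + r * k + ((k * t : ℕ) : ℤ) = ((i : ℕ) : ℤ) + (r + t) * k := by
    push_cast; ring
  obtain ⟨A, g1, g2, g3⟩ := exists_move B (((i : ℕ) : ℤ) + r * k) (k * t) (by positivity)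
    (by rwa [← hB]) (by rw [e]; rwa [← hB])
  refine ⟨A, fun i' j => ?_⟩
  rw [g3, e, ← hB]
  by_cases hi : i' = i
  · subst hi
    rw [h3]
    constructor
    · rintro (⟨h, h'⟩ | h)
      · exact Or.inl ⟨h, fun hh => h' (dec_unique hh).2⟩
      · exact Or.inr (by rw [h])
    · rintro (⟨h, h'⟩ | h)
      · exact Or.inl ⟨h, fun hh => h' (by rw [hh])⟩
      · exact Or.inr (dec_unique h).2
  · rw [h0 i' hi]
    constructor
    · intro h
      exact Or.inl ⟨h, fun hh => hi (dec_unique hh).1⟩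
    · rintro (⟨h, _⟩ | h)
      · exact h
      · exact absurd (dec_unique h).1 hi

theorem core_quot {k : ℕ} (hk : 0 < k) {P : Partition}
    (h : Relation.ReflTransGen (fun A B => IsRimHook A B k) P Partition.empty) :
    ∃ Q', Quot0 k P Q' := by
  induction h using Relation.ReflTransGen.head_induction_on with
  | refl => exact ⟨_, quot0_empty k⟩
  | head hac hc ih =>
    obtain ⟨Q', hQ'⟩ := ih
    exact quot_up hk hQ' 1 one_pos (by simpa using hac)

theorem quot0_of_core {k : ℕ} (hk : 0 < k) {P : Partition} {Q : Fin k → Partition}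
    (hcore : IsKCore k P Partition.empty) (hQ : IsKQuotient k P Q) : Quot0 k P Q := by
  obtain ⟨Q', hQ'⟩ := core_quot hk hcore.1
  rw [hQ'.unique hQ]
  exact hQ'

theorem not_hook_self {A : Partition} {t : ℕ} : ¬ IsRimHook A A t := by
  rintro ⟨-, ⟨x, h1, h2⟩, -⟩
  exact h2 h1

theorem RHT.size {P : Partition} {ν : List ℕ} (T : RHT P ν) : ν.sum = P.size := by
  have key : ∀ (j : ℕ) (hj : j < ν.length + 1), (T.chain ⟨j, hj⟩).size = (ν.take j).sum := by
    intro j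
    induction j with
    | zero =>
      intro hj
      have : T.chain ⟨0, hj⟩ = Partition.empty := T.chain_zero
      rw [this]
      simp [Partition.size, Partition.empty]
    | succ j ih =>
      intro hj
      have h := T.step ⟨j, by omega⟩
      have ih := ih (by omega)
      rw [List.sum_take_succ _ _ (by omega), ← ih]
      rcases h with ⟨h1, h2⟩ | ⟨h1, h2⟩
      · simp at h1
        rw [h1]
        exact congrArg Partition.size h2
      · exact h2.size
  have := key ν.length (by omega)
  rw [List.take_length] at this
  rw [← this]
  exact congrArg Partition.size T.chain_last

/-! counting -/

theorem zpart_cons (x : ℕ) (M : Multiset ℕ) :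
    zpart (x ::ₘ M) = x * (M.count x + 1) * zpart M := by
  unfold zpart
  have h1 : ∏ j ∈ (x ::ₘ M).toFinset, ((x ::ₘ M).count j).factorial
      = (M.count x + 1).factorial * ∏ j ∈ M.toFinset.erase x, (M.count j).factorial := by
    have hins : insert x M.toFinset = insert x (M.toFinset.erase x) := by
      ext y
      simp only [Finset.mem_insert, Finset.mem_erase]
      tauto
    rw [Multiset.toFinset_cons, hins,
      Finset.prod_insert (Finset.notMem_erase _ _)]
    congr 1
    · simp
    · refine Finset.prod_congr rfl fun j hj => ?_
      rw [Multiset.count_cons_of_ne (Finset.ne_of_mem_erase hj)]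
  have h2 : ∏ j ∈ M.toFinset, (M.count j).factorial
      = (M.count x).factorial * ∏ j ∈ M.toFinset.erase x, (M.count j).factorial := by
    by_cases hx : x ∈ M.toFinset
    · rw [Finset.mul_prod_erase _ (fun j => (M.count j).factorial) hx]
    · rw [Finset.erase_eq_of_notMem hx]
      have : M.count x = 0 := by
        rw [Multiset.count_eq_zero]; simpa using hx
      simp [this]
  rw [h1, h2, Multiset.prod_cons, Nat.factorial_succ]
  ring

theorem zpart_pos (M : Multiset ℕ) (h : ∀ x ∈ M, 0 < x) : 0 < zpart M := by
  unfold zpart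
  have : 0 < M.prod := Nat.pos_of_ne_zero (fun hh => by
    rw [Multiset.prod_eq_zero_iff] at hh
    exact absurd (h 0 hh) (by simp))
  have : 0 < ∏ j ∈ M.toFinset, (M.count j).factorial :=
    Finset.prod_pos fun _ _ => Nat.factorial_pos _
  positivity

/-- multiset of values of `m` on the fibre of `a` over `i` -/
def fib {n k : ℕ} (m : Fin n → ℕ) (a : Fin n → Fin k) (i : Fin k) : Multiset ℕ :=
  ∑ j, if a j = i then {m j} else 0

theorem fib_sum {n k : ℕ} (m : Fin n → ℕ) (a : Fin n → Fin k) :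
    ∑ i, fib m a i = ∑ j, {m j} := by
  unfold fib
  rw [Finset.sum_comm]
  simp

theorem count_words {k : ℕ} : ∀ (n : ℕ) (m : Fin n → ℕ) (ν : Fin k → Multiset ℕ),
    ∑ i, ν i = ∑ j, {m j} →
    Nat.card {a : Fin n → Fin k // ∀ i, fib m a i = ν i} * ∏ i, zpart (ν i)
      = zpart (∑ j, {m j}) := by
  intro n
  induction n with
  | zero =>
    intro m ν h
    have hν : ∀ i, ν i = 0 := by
      simpa using h
    have : Nat.card {a : Fin 0 → Fin k // ∀ i, fib m a i = ν i} = 1 := by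
      rw [Nat.card_eq_one_iff_unique]
      exact ⟨⟨fun a b => Subtype.ext (Subsingleton.elim _ _)⟩,
        ⟨⟨Fin.elim0, fun i => by simp [fib, hν]⟩⟩⟩
    rw [this]
    simp [hν, zpart]
  | succ n ih =>
    intro m ν h
    classical
    have hcard : Nat.card {a : Fin (n+1) → Fin k // ∀ i, fib m a i = ν i} =
        ∑ i₀ : Fin k, Nat.card {a : Fin n → Fin k //
          ∀ i, (if i₀ = i then {m 0} else 0) + fib (fun j => m j.succ) a i = ν i} := by
      rw [← Nat.card_sigma]
      refine Nat.card_congr ?_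
      refine ⟨fun a => ⟨a.1 0, fun j => a.1 j.succ, fun i => ?_⟩,
        fun b => ⟨Fin.cons b.1 b.2.1, fun i => ?_⟩, ?_, ?_⟩
      · rw [← a.2 i]
        simp [fib, Fin.sum_univ_succ]
      · rw [← b.2.2 i]
        simp [fib, Fin.sum_univ_succ]
      · intro a
        apply Subtype.ext
        funext j
        refine Fin.cases ?_ (fun j => ?_) j <;> simp
      · intro b
        rfl
    rw [hcard, Finset.sum_mul, Fin.sum_univ_succ, Multiset.singleton_add, zpart_cons]
    have hterm : ∀ i₀ : Fin k, Nat.card {a : Fin n → Fin k //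
          ∀ i, (if i₀ = i then {m 0} else 0) + fib (fun j => m j.succ) a i = ν i}
          * ∏ i, zpart (ν i)
        = m 0 * (ν i₀).count (m 0) * zpart (∑ j : Fin n, {m j.succ}) := by
      intro i₀
      by_cases hx : m 0 ∈ ν i₀
      · obtain ⟨ρ, hρ⟩ := Multiset.exists_cons_of_mem hx
        set ν' := Function.update ν i₀ ρ with hν'
        have hνν : ∀ i, ν i = (if i₀ = i then {m 0} else 0) + ν' i := by
          intro i
          by_cases hi : i₀ = i
          · subst hi
            simp [hν', hρ]
          · simp [hν', hi, Function.update_of_ne (Ne.symm hi)]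
        have hsum' : ∑ i, ν' i = ∑ j : Fin n, {m j.succ} := by
          have h' := h
          simp only [hνν] at h'
          rw [Finset.sum_add_distrib, Fin.sum_univ_succ] at h'
          simpa using h'
        have hi := ih (fun j => m j.succ) ν' hsum'
        have hc : Nat.card {a : Fin n → Fin k //
          ∀ i, (if i₀ = i then {m 0} else 0) + fib (fun j => m j.succ) a i = ν i} =
          Nat.card {a : Fin n → Fin k // ∀ i, fib (fun j => m j.succ) a i = ν' i} := by
          simp only [hνν, add_right_inj]
        have hp : ∏ i, zpart (ν i) = m 0 * (ν i₀).count (m 0) * ∏ i, zpart (ν' i) := by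
          rw [← Finset.mul_prod_erase _ _ (Finset.mem_univ i₀),
            ← Finset.mul_prod_erase _ (fun i => zpart (ν' i)) (Finset.mem_univ i₀)]
          have : ∏ i ∈ Finset.univ.erase i₀, zpart (ν i)
              = ∏ i ∈ Finset.univ.erase i₀, zpart (ν' i) := by
            refine Finset.prod_congr rfl fun i hi => ?_
            rw [hν', Function.update_of_ne (Finset.ne_of_mem_erase hi)]
          rw [this, hρ, zpart_cons, hν', Function.update_self, Multiset.count_cons_self]
          ring
        rw [hc, hp, ← hi]
        ring
      · rw [Multiset.count_eq_zero.2 hx]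
        have : Nat.card {a : Fin n → Fin k //
          ∀ i, (if i₀ = i then {m 0} else 0) + fib (fun j => m j.succ) a i = ν i} = 0 := by
          rw [Nat.card_eq_zero]
          left
          refine ⟨fun a => hx ?_⟩
          rw [← a.2 i₀]
          simp
        rw [this]
        simp
    rw [Finset.sum_congr rfl fun i _ => hterm i, ← Finset.sum_mul, ← Finset.mul_sum]
    congr 2
    rw [← Multiset.count_sum', h, Fin.sum_univ_succ]
    simp

theorem sum_sing {ι : Type*} (S : Finset ι) (m : ι → ℕ) :
    ∑ j ∈ S, ({m j} : Multiset ℕ) = S.val.map m := by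
  rw [← Multiset.sum_map_singleton (S.val.map m), Multiset.map_map]
  rfl

theorem exists_e {n k : ℕ} (m : Fin n → ℕ) (hm : Antitone m) (a : Fin n → Fin k) (i : Fin k)
    (ν : List ℕ) (hν : ν.Pairwise (· ≥ ·)) (h : fib m a i = (ν : Multiset ℕ)) :
    ∃ e : Fin ν.length → Fin n, StrictMono e ∧ (∀ s, a (e s) = i) ∧
      (∀ j, a j = i → ∃ s, e s = j) ∧ ∀ s, ν.get s = m (e s) := by
  classical
  let S : Finset (Fin n) := Finset.univ.filter fun j => a j = i
  have hS : fib m a i = S.val.map m := by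
    unfold fib
    rw [← Finset.sum_filter]
    change ∑ j ∈ S, {m j} = _
    rw [sum_sing]
  have hcard : S.card = ν.length := by
    have := congrArg Multiset.card (hS.symm.trans h)
    simpa using this
  let e := S.orderEmbOfFin hcard
  have hl : List.ofFn (fun s => m (e s)) = ν := by
    refine List.Perm.eq_of_pairwise' (r := (· ≥ ·)) ?_ hν ?_
    · rw [List.pairwise_ofFn]
      intro i j hij
      exact hm (e.monotone hij.le)
    · rw [← Multiset.coe_eq_coe, ← h, hS, ← Fin.univ_val_map]
      have : S = Finset.univ.map e.toEmbedding := by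
        rw [Finset.map_orderEmbOfFin_univ]
      conv_rhs => rw [this, Finset.map_val, Multiset.map_map]
      rfl
  refine ⟨e, e.strictMono, ?_, ?_, ?_⟩
  · intro s
    have := S.orderEmbOfFin_mem hcard s
    exact (Finset.mem_filter.1 this).2
  · intro j hj
    have : j ∈ Set.range e := by
      rw [Finset.range_orderEmbOfFin]
      simpa [S] using hj
    exact this
  · intro s
    have : ∀ (l : List ℕ) (hl : l = ν) (h1 : s.1 < l.length), l[s.1] = ν.get s := by
      rintro l rfl h1; rfl
    rw [← this _ hl (by simp)]
    simp

theorem fib_of_e {n k : ℕ} (m : Fin n → ℕ) (a : Fin n → Fin k) (i : Fin k)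
    (ν : List ℕ) (e : Fin ν.length → Fin n) (he : StrictMono e) (h1 : ∀ s, a (e s) = i)
    (h2 : ∀ j, a j = i → ∃ s, e s = j) (h3 : ∀ s, ν.get s = m (e s)) :
    fib m a i = (ν : Multiset ℕ) := by
  classical
  unfold fib
  rw [← Finset.sum_filter]
  have : (Finset.univ.filter fun j => a j = i) = Finset.univ.image e := by
    ext j
    simp only [Finset.mem_filter, Finset.mem_univ, true_and, Finset.mem_image]
    exact ⟨h2 j, by rintro ⟨s, rfl⟩; exact h1 s⟩
  rw [this, Finset.sum_image (fun _ _ _ _ h => he.injective h)]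
  simp only [← h3]
  rw [sum_sing, Fin.univ_val_map, List.ofFn_get]

theorem fin_const {n : ℕ} {α : Type*} (f : Fin (n+1) → α) (lo hi : Fin (n+1)) (hle : lo ≤ hi)
    (h : ∀ j : Fin n, lo ≤ j.castSucc → j.castSucc < hi → f j.castSucc = f j.succ) :
    f lo = f hi := by
  induction hi using Fin.induction with
  | zero => rw [Fin.le_zero_iff.1 hle]
  | succ j ih =>
    rcases eq_or_lt_of_le hle with rfl | hlt
    · rfl
    · have h1 : lo ≤ j.castSucc := by
        rw [Fin.lt_def] at hlt; rw [Fin.le_def]; simp at *; omega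
      rw [ih h1 (fun j' a b => h j' a (b.trans (Fin.castSucc_lt_succ))),
        h j h1 (Fin.castSucc_lt_succ)]

theorem chain_quot {k : ℕ} (hk : 0 < k) {P : Partition} {κ : List ℕ} (m : Fin κ.length → ℕ)
    (hκ : ∀ j, κ.get j = k * m j) (hm : ∀ j, 0 < m j) (T : RHT P κ) :
    ∃ QC : Fin (κ.length + 1) → Fin k → Partition, ∀ j, Quot0 k (T.chain j) (QC j) := by
  have : ∀ j, ∃ Q : Fin k → Partition, Quot0 k (T.chain j) Q := by
    intro j
    induction j using Fin.induction with
    | zero => rw [T.chain_zero]; exact ⟨_, quot0_empty k⟩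
    | succ j ih =>
      obtain ⟨Q, hQ⟩ := ih
      rcases T.step j with ⟨h1, h2⟩ | ⟨h1, h2⟩
      · rw [h2]; exact ⟨Q, hQ⟩
      · rw [hκ] at h2
        exact quot_up hk hQ _ (hm j) h2
  choose QC h using this
  exact ⟨QC, h⟩

/-- `OmegaRel` with a specified assignment `a`. -/
def OmegaA (k : ℕ) {P : Partition} {κ : List ℕ} (T : RHT P κ)
    {Q : Fin k → Partition} {ν : Fin k → List ℕ}
    (Ti : ∀ i : Fin k, RHT (Q i) (ν i)) (a : Fin κ.length → Fin k) : Prop :=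
  ∃ (QC : Fin (κ.length + 1) → Fin k → Partition),
    (∀ j, IsKQuotient k (T.chain j) (QC j)) ∧
    (∀ j : Fin κ.length, ∀ i, i ≠ a j → QC j.castSucc i = QC j.succ i) ∧
    (∀ j : Fin κ.length, ∃ t : ℕ, κ.get j = k * t ∧
      IsStep (QC j.succ (a j)) (QC j.castSucc (a j)) t) ∧
    (∀ i : Fin k, ∃ e : Fin (ν i).length → Fin κ.length,
      StrictMono e ∧ (∀ s, a (e s) = i) ∧ (∀ j, a j = i → ∃ s, e s = j) ∧
      (∀ s, k * (ν i).get s = κ.get (e s)) ∧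
      (Ti i).chain 0 = QC 0 i ∧
      (∀ s : Fin (ν i).length, (Ti i).chain s.succ = QC (Fin.succ (e s)) i))

theorem omegaRel_iff {k : ℕ} {P : Partition} {κ : List ℕ} (T : RHT P κ)
    {Q : Fin k → Partition} {ν : Fin k → List ℕ} (Ti : ∀ i : Fin k, RHT (Q i) (ν i)) :
    OmegaRel k T Ti ↔ ∃ a, OmegaA k T Ti a := by
  constructor
  · rintro ⟨QC, a, h⟩; exact ⟨a, QC, h⟩
  · rintro ⟨a, QC, h⟩; exact ⟨QC, a, h⟩

theorem part1 {k : ℕ} (hk : 0 < k) {P : Partition} {Q : Fin k → Partition}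
    (hQ : Quot0 k P Q) {κ : List ℕ} (m : Fin κ.length → ℕ)
    (hκ : ∀ j, κ.get j = k * m j) (hm : ∀ j, 0 < m j) (hanti : Antitone m) (T : RHT P κ) :
    ∃ (ν : Fin k → List ℕ) (Ti : ∀ i : Fin k, RHT (Q i) (ν i)),
      (∀ i, (ν i).Pairwise (· ≥ ·) ∧ (∀ x ∈ ν i, 0 < x) ∧ (ν i).sum = (Q i).size) ∧
      (∑ i : Fin k, ((ν i : Multiset ℕ)) = ∑ j, {m j}) ∧ OmegaRel k T Ti := by
  obtain ⟨QC, hQC⟩ := chain_quot hk m hκ hm T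
  have hhook : ∀ j : Fin κ.length, ∃ i, (∀ i', i' ≠ i → QC j.succ i' = QC j.castSucc i') ∧
      IsRimHook (QC j.succ i) (QC j.castSucc i) (m j) := by
    intro j
    rw [← quot_hook hk (hQC _) (hQC _) _ (hm j), ← hκ]
    rcases T.step j with ⟨h1, h2⟩ | ⟨h1, h2⟩
    · exfalso
      rw [hκ] at h1
      have := hm j
      have : 0 < k * m j := by positivity
      omega
    · exact h2
  choose a ha1 ha2 using hhook
  have h0 : QC 0 = fun _ => Partition.empty := by
    have := hQC 0
    rw [T.chain_zero] at this
    exact ((quot0_empty k).unique this.isK)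
  have hl : QC (Fin.last _) = Q := by
    have := hQC (Fin.last _)
    rw [T.chain_last] at this
    exact hQ.unique this.isK
  let ν : Fin k → List ℕ := fun i => (fib m a i).sort (· ≥ ·)
  have hνfib : ∀ i, fib m a i = (ν i : Multiset ℕ) := fun i => by simp [ν]
  have hνsort : ∀ i, (ν i).Pairwise (· ≥ ·) := fun i => Multiset.pairwise_sort _ _
  choose e he1 he2 he3 he4 using fun i => exists_e m hanti a i (ν i) (hνsort i) (hνfib i)
  let ch : ∀ i, Fin ((ν i).length + 1) → Partition :=
    fun i => Fin.cases (QC 0 i) (fun s => QC (e i s).succ i)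
  have claim : ∀ i (p : Fin ((ν i).length + 1)) (hi : Fin (κ.length + 1)),
      (∀ s : Fin (ν i).length, s.castSucc < p → (e i s).succ ≤ hi) →
      (∀ s : Fin (ν i).length, p ≤ s.castSucc → hi ≤ (e i s).castSucc) →
      ch i p = QC hi i := by
    intro i p hi
    refine Fin.cases ?_ (fun s => ?_) p
    · intro _ h2
      refine fin_const (fun j => QC j i) 0 hi (Fin.zero_le _) ?_
      intro j _ hj
      refine (ha1 j i ?_).symm
      intro hij
      obtain ⟨s, rfl⟩ := he3 i j hij.symm
      exact absurd hj (not_lt.2 (h2 s (Fin.zero_le _)))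
    · intro h1 h2
      refine fin_const (fun j => QC j i) _ hi (h1 s Fin.castSucc_lt_succ) ?_
      intro j hj1 hj2
      refine (ha1 j i ?_).symm
      intro hij
      obtain ⟨s', rfl⟩ := he3 i j hij.symm
      rw [Fin.succ_le_castSucc_iff, (he1 i).lt_iff_lt] at hj1
      exact absurd hj2 (not_lt.2 (h2 s' (Fin.succ_le_castSucc_iff.2 hj1)))
  have hcast : ∀ i (s : Fin (ν i).length), ch i s.castSucc = QC (e i s).castSucc i := by
    intro i s
    refine claim i _ _ (fun s' hs' => ?_) (fun s' hs' => ?_)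
    · rw [Fin.succ_le_castSucc_iff, (he1 i).lt_iff_lt]
      exact hs'
    · rw [Fin.castSucc_le_castSucc_iff, (he1 i).le_iff_le]
      exact hs'
  let Ti : ∀ i, RHT (Q i) (ν i) := fun i =>
    { chain := ch i
      chain_zero := by
        show QC 0 i = _
        rw [h0]
      chain_last := by
        rw [claim i (Fin.last _) (Fin.last _) (fun _ _ => Fin.le_last _), hl]
        intro s hs
        exact absurd (Fin.castSucc_lt_last s) (not_lt.2 hs)
      step := by
        intro s
        right
        rw [he4, hcast]
        refine ⟨hm _, ?_⟩
        have := ha2 (e i s)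
        rw [he2] at this
        exact this }
  refine ⟨ν, Ti, fun i => ⟨hνsort i, ?_, (Ti i).size⟩, ?_, QC, a, fun j => (hQC j).isK,
    fun j i hi => (ha1 j i hi).symm, fun j => ⟨m j, hκ j, Or.inr ⟨hm j, ha2 j⟩⟩, fun i =>
    ⟨e i, he1 i, he2 i, he3 i, fun s => ?_, rfl, fun s => rfl⟩⟩
  · intro x hx
    obtain ⟨s, rfl⟩ := List.get_of_mem hx
    rw [he4]
    exact hm _
  · rw [← fib_sum m a]
    exact Finset.sum_congr rfl fun i _ => (hνfib i).symm
  · rw [he4, hκ]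

theorem omegaA_valid {k : ℕ} (hk : 0 < k) {P : Partition} {Q : Fin k → Partition}
    {κ : List ℕ} (m : Fin κ.length → ℕ) (hκ : ∀ j, κ.get j = k * m j)
    {ν : Fin k → List ℕ} {Ti : ∀ i : Fin k, RHT (Q i) (ν i)} {T : RHT P κ}
    {a : Fin κ.length → Fin k} (h : OmegaA k T Ti a) (i : Fin k) :
    fib m a i = (ν i : Multiset ℕ) := by
  obtain ⟨QC, -, -, -, h⟩ := h
  obtain ⟨e, h1, h2, h3, h4, -⟩ := h i
  refine fib_of_e m a i (ν i) e h1 h2 h3 fun s => ?_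
  have := h4 s
  rw [hκ] at this
  exact Nat.eq_of_mul_eq_mul_left hk this

theorem omegaA_a_unique {k : ℕ} (hk : 0 < k) {P : Partition} {Q : Fin k → Partition}
    {κ : List ℕ} (m : Fin κ.length → ℕ) (hκ : ∀ j, κ.get j = k * m j) (hm : ∀ j, 0 < m j)
    {ν : Fin k → List ℕ} {Ti : ∀ i : Fin k, RHT (Q i) (ν i)} {T : RHT P κ}
    {a a' : Fin κ.length → Fin k} (h : OmegaA k T Ti a) (h' : OmegaA k T Ti a') : a = a' := by
  obtain ⟨R, hR⟩ := chain_quot hk m hκ hm T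
  obtain ⟨QC, h1, h2, h3, -⟩ := h
  obtain ⟨QC', h1', h2', -, -⟩ := h'
  have e1 : QC = R := funext fun j => (hR j).unique (h1 j)
  have e2 : QC' = R := funext fun j => (hR j).unique (h1' j)
  subst e1
  subst e2
  funext j
  by_contra hne
  obtain ⟨t, ht, hs⟩ := h3 j
  rw [h2' j (a j) hne] at hs
  rcases hs with ⟨rfl, -⟩ | ⟨-, hs⟩
  · rw [hκ] at ht
    have := hm j
    have : 0 < k * m j := by positivity
    omega
  · exact not_hook_self hs

theorem omegaA_T_unique {k : ℕ} (hk : 0 < k) {P : Partition} {Q : Fin k → Partition}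
    {κ : List ℕ} (m : Fin κ.length → ℕ) (hκ : ∀ j, κ.get j = k * m j) (hm : ∀ j, 0 < m j)
    {ν : Fin k → List ℕ} {Ti : ∀ i : Fin k, RHT (Q i) (ν i)} {T T' : RHT P κ}
    {a : Fin κ.length → Fin k} (h : OmegaA k T Ti a) (h' : OmegaA k T' Ti a) : T = T' := by
  obtain ⟨R, hR⟩ := chain_quot hk m hκ hm T
  obtain ⟨R', hR'⟩ := chain_quot hk m hκ hm T'
  obtain ⟨QC, h1, h2, -, h4⟩ := h
  obtain ⟨QC', h1', h2', -, h4'⟩ := h'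
  have e1 : QC = R := funext fun j => (hR j).unique (h1 j)
  have e2 : QC' = R' := funext fun j => (hR' j).unique (h1' j)
  subst e1
  subst e2
  have hQ : ∀ j, QC j = QC' j := by
    intro j
    induction j using Fin.induction with
    | zero =>
      funext i
      obtain ⟨e, -, -, -, -, c, -⟩ := h4 i
      obtain ⟨e', -, -, -, -, c', -⟩ := h4' i
      rw [← c, ← c']
    | succ j ih =>
      funext i
      by_cases hi : i = a j
      · obtain ⟨e, g1, g2, g3, -, -, g4⟩ := h4 i
        obtain ⟨e', g1', g2', g3', -, -, g4'⟩ := h4' i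
        have : e = e' := by
          rw [← StrictMono.range_inj g1 g1']
          ext x
          constructor
          · rintro ⟨s, rfl⟩; exact g3' _ (g2 s)
          · rintro ⟨s, rfl⟩; exact g3 _ (g2' s)
        subst this
        obtain ⟨s, rfl⟩ := g3 j hi.symm
        rw [← g4, ← g4']
      · rw [← h2 j i hi, ← h2' j i hi, ih]
  have hc : T.chain = T'.chain := by
    funext j
    have := hR' j
    rw [← hQ j] at this
    exact (hR j).inj hk this
  cases T
  cases T'
  simp only at hc
  subst hc
  rfl

theorem omegaA_exists {k : ℕ} (hk : 0 < k) {P : Partition} {Q : Fin k → Partition}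
    (hQ : Quot0 k P Q)
    {κ : List ℕ} (m : Fin κ.length → ℕ) (hκ : ∀ j, κ.get j = k * m j) (hm : ∀ j, 0 < m j)
    (hanti : Antitone m)
    {ν : Fin k → List ℕ} (hν : ∀ i, (ν i).Pairwise (· ≥ ·))
    (Ti : ∀ i : Fin k, RHT (Q i) (ν i))
    (a : Fin κ.length → Fin k) (ha : ∀ i, fib m a i = (ν i : Multiset ℕ)) :
    ∃ T : RHT P κ, OmegaA k T Ti a := by
  classical
  choose e he1 he2 he3 he4 using fun i => exists_e m hanti a i (ν i) (hν i) (ha i)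
  let S : Fin (κ.length + 1) → (i : Fin k) → Finset (Fin (ν i).length) := fun j i =>
    Finset.univ.filter fun s => (e i s).castSucc < j
  have hS : ∀ j i, (S j i).card < (ν i).length + 1 := fun j i => by
    have := Finset.card_le_univ (S j i)
    simp at this
    omega
  let QC : Fin (κ.length + 1) → Fin k → Partition := fun j i =>
    (Ti i).chain ⟨(S j i).card, hS j i⟩
  have q0 : QC 0 = fun _ => Partition.empty := by
    funext i
    rw [← (Ti i).chain_zero]
    simp only [QC]
    congr 1
    apply Fin.ext
    simp [S]
  have ql : QC (Fin.last _) = Q := by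
    funext i
    refine Eq.trans ?_ (Ti i).chain_last
    simp only [QC]
    congr 1
    apply Fin.ext
    simp [S, Fin.castSucc_lt_last]
  have qne : ∀ (j : Fin κ.length) i, i ≠ a j → QC j.castSucc i = QC j.succ i := by
    intro j i hi
    simp only [QC]
    congr 2
    congr 1
    simp only [S]
    refine Finset.filter_congr fun s _ => ?_
    have : e i s ≠ j := fun h => hi (by rw [← h, he2])
    rw [Fin.castSucc_lt_castSucc_iff, Fin.castSucc_lt_succ_iff]
    exact ⟨le_of_lt, fun h => lt_of_le_of_ne h this⟩
  have qcast : ∀ i s, QC (e i s).castSucc i = (Ti i).chain s.castSucc := by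
    intro i s
    simp only [QC]
    congr 1
    apply Fin.ext
    have : S (e i s).castSucc i = Finset.Iio s := by
      ext s'
      simp [S, (he1 i).lt_iff_lt]
    simp [this]
  have qsucc : ∀ i s, QC (e i s).succ i = (Ti i).chain s.succ := by
    intro i s
    simp only [QC]
    congr 1
    apply Fin.ext
    have : S (e i s).succ i = Finset.Iic s := by
      ext s'
      simp [S, (he1 i).le_iff_le, Fin.castSucc_lt_succ_iff]
    simp [this]
  have qstep : ∀ j : Fin κ.length,
      IsRimHook (QC j.succ (a j)) (QC j.castSucc (a j)) (m j) := by
    intro j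
    obtain ⟨s, hs⟩ := he3 (a j) j rfl
    have h1 := qcast (a j) s
    have h2 := qsucc (a j) s
    have h3 := he4 (a j) s
    rw [hs] at h1 h2 h3
    rw [h1, h2, ← h3]
    rcases (Ti (a j)).step s with ⟨h, -⟩ | ⟨-, h⟩
    · rw [h3] at h
      have := hm j
      omega
    · exact h
  have hex : ∀ j, ∃ A, Quot0 k A (QC j) := by
    intro j
    induction j using Fin.induction with
    | zero => rw [q0]; exact ⟨_, quot0_empty k⟩
    | succ j ih =>
      obtain ⟨B, hB⟩ := ih
      exact quot_up' hk hB (m j) (hm j) (a j) (fun i hi => (qne j i hi).symm) (qstep j)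
  choose C hC using hex
  let T : RHT P κ :=
    { chain := C
      chain_zero := by
        have := hC 0
        rw [q0] at this
        exact this.inj hk (quot0_empty k)
      chain_last := by
        have := hC (Fin.last _)
        rw [ql] at this
        exact this.inj hk hQ
      step := by
        intro j
        right
        rw [hκ]
        refine ⟨Nat.mul_pos hk (hm j), ?_⟩
        rw [quot_hook hk (hC _) (hC _) _ (hm j)]
        exact ⟨a j, fun i hi => (qne j i hi).symm, qstep j⟩ }
  refine ⟨T, QC, fun j => (hC j).isK, qne, fun j => ⟨m j, hκ j, Or.inr ⟨hm j, qstep j⟩⟩,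
    fun i => ⟨e i, he1 i, he2 i, he3 i, fun s => by rw [he4, hκ], ?_, fun s => (qsucc i s).symm⟩⟩
  rw [q0, (Ti i).chain_zero]

theorem part2 {k : ℕ} (hk : 0 < k) {P : Partition} {Q : Fin k → Partition}
    (hQ : Quot0 k P Q)
    {κ : List ℕ} (m : Fin κ.length → ℕ) (hκ : ∀ j, κ.get j = k * m j) (hm : ∀ j, 0 < m j)
    (hanti : Antitone m)
    {ν : Fin k → List ℕ} (hν : ∀ i, (ν i).Pairwise (· ≥ ·))
    (hsum : ∑ i : Fin k, ((ν i : Multiset ℕ)) = ∑ j, {m j})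
    (Ti : ∀ i : Fin k, RHT (Q i) (ν i)) :
    Nat.card {T : RHT P κ // OmegaRel k T Ti} * ∏ i, zpart (ν i : Multiset ℕ) =
      zpart (∑ j, {m j}) := by
  rw [← count_words κ.length m (fun i => (ν i : Multiset ℕ)) hsum]
  congr 1
  refine (Nat.card_congr (Equiv.ofBijective
    (fun a : {a : Fin κ.length → Fin k // ∀ i, fib m a i = (ν i : Multiset ℕ)} =>
      (⟨(omegaA_exists hk hQ m hκ hm hanti hν Ti a.1 a.2).choose, (omegaRel_iff _ _).2 ⟨a.1,
        (omegaA_exists hk hQ m hκ hm hanti hν Ti a.1 a.2).choose_spec⟩⟩ :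
          {T : RHT P κ // OmegaRel k T Ti})) ⟨?_, ?_⟩)).symm
  · intro a b hab
    have hab' := congrArg Subtype.val hab
    simp only at hab'
    have h1 := (omegaA_exists hk hQ m hκ hm hanti hν Ti a.1 a.2).choose_spec
    have h2 := (omegaA_exists hk hQ m hκ hm hanti hν Ti b.1 b.2).choose_spec
    rw [← hab'] at h2
    exact Subtype.ext (omegaA_a_unique hk m hκ hm h1 h2)
  · rintro ⟨T, hT⟩
    obtain ⟨a, ha⟩ := (omegaRel_iff _ _).1 hT
    refine ⟨⟨a, omegaA_valid hk m hκ ha⟩, Subtype.ext ?_⟩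
    exact omegaA_T_unique hk m hκ hm (omegaA_exists hk hQ m hκ hm hanti hν Ti a
      (omegaA_valid hk m hκ ha)).choose_spec ha


/-- let `λ` have empty `k`-core, `k`-quotient `(λ₁,…,λ_k)`, and
let `μ` be a partition with `|λ| = k|μ|`. The map `ω_{kμ}^λ` from `RHT_{kμ}^λ` to
the union, over all `k`-tuples `(μ₁,…,μ_k)` of partitions with `|μᵢ| = |λᵢ|` and
`μ₁ ⊕ ⋯ ⊕ μ_k = μ`, of `RHT_{μ₁}^{λ₁} × ⋯ × RHT_{μ_k}^{λ_k}`, is (well defined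
and) surjective, and each `k`-tuple `(T₁,…,T_k)` in its range has exactly
`z_μ/(z_{μ₁}⋯z_{μ_k})` preimages. -/
theorem omega_surjective_and_fiber_count (k p : ℕ) (hk : 2 ≤ k) (P : Partition)
    (Q : Fin k → Partition) (hsize : P.size = k * p)
    (hcore : IsKCore k P Partition.empty) (hQ : IsKQuotient k P Q)
    (μ : List ℕ) (hμsort : μ.Pairwise (· ≥ ·)) (hμpos : ∀ x ∈ μ, 0 < x)
    (hμsum : μ.sum = p) :
    (∀ T : RHT P (μ.map fun x => k * x),
      ∃ (ν : Fin k → List ℕ) (Ti : ∀ i : Fin k, RHT (Q i) (ν i)),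
        (∀ i, (ν i).Pairwise (· ≥ ·) ∧ (∀ x ∈ ν i, 0 < x) ∧ (ν i).sum = (Q i).size) ∧
        (∑ i : Fin k, ((ν i : Multiset ℕ)) = (μ : Multiset ℕ)) ∧
        OmegaRel k T Ti) ∧
    (∀ ν : Fin k → List ℕ,
      (∀ i, (ν i).Pairwise (· ≥ ·) ∧ (∀ x ∈ ν i, 0 < x) ∧ (ν i).sum = (Q i).size) →
      (∑ i : Fin k, ((ν i : Multiset ℕ)) = (μ : Multiset ℕ)) →
      ∀ Ti : ∀ i : Fin k, RHT (Q i) (ν i),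
        (∃ T : RHT P (μ.map fun x => k * x), OmegaRel k T Ti) ∧
        (Nat.card {T : RHT P (μ.map fun x => k * x) // OmegaRel k T Ti} : ℚ) =
          (zpart (μ : Multiset ℕ) : ℚ) /
            ∏ i : Fin k, (zpart ((ν i : Multiset ℕ)) : ℚ)) := by
  have hk0 : 0 < k := by omega
  have hQ0 := quot0_of_core hk0 hcore hQ
  have hlen : (μ.map fun x => k * x).length = μ.length := List.length_map _
  let m : Fin (μ.map fun x => k * x).length → ℕ := fun j => μ.get (Fin.cast hlen j)
  have hκ : ∀ j, (μ.map fun x => k * x).get j = k * m j := by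
    intro j
    simp [m]
  have hm : ∀ j, 0 < m j := fun j => hμpos _ (List.get_mem _ _)
  have hanti : Antitone m := by
    intro i j hij
    rcases eq_or_lt_of_le hij with rfl | h
    · exact le_rfl
    · exact List.pairwise_iff_get.1 hμsort (Fin.cast hlen i) (Fin.cast hlen j) h
  have hμm : (μ : Multiset ℕ) = ∑ j, {m j} := by
    have h1 : ∑ j, ({m j} : Multiset ℕ) = ∑ s : Fin μ.length, {μ.get s} :=
      Fintype.sum_equiv (finCongr hlen) _ _ (fun j => rfl)
    rw [h1, sum_sing, Fin.univ_val_map, List.ofFn_get]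
  rw [hμm]
  refine ⟨fun T => part1 hk0 hQ0 m hκ hm hanti T, fun ν hν hsum Ti => ?_⟩
  have key := part2 hk0 hQ0 m hκ hm hanti (fun i => (hν i).1) hsum Ti
  have hz : 0 < ∏ i, zpart (ν i : Multiset ℕ) :=
    Finset.prod_pos fun i _ => zpart_pos _ fun x hx => (hν i).2.1 x (by simpa using hx)
  constructor
  · have hpos : 0 < zpart (∑ j, {m j}) := by
      rw [← hμm]
      exact zpart_pos _ fun x hx => hμpos x (by simpa using hx)
    rw [← key] at hpos
    have := Nat.pos_of_mul_pos_right hpos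
    obtain ⟨⟨T, hT⟩⟩ := (Nat.card_pos_iff.1 this).1
    exact ⟨T, hT⟩
  · rw [eq_div_iff, ← key]
    · push_cast; rfl
    · have : ((∏ i, zpart (ν i : Multiset ℕ) : ℕ) : ℚ) ≠ 0 := by
        exact_mod_cast hz.ne'
      simpa using this

end RimHookPaper
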